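/- arXiv:1406.7489 — 3 statements merged into one kernel-verified Lean document; each statement's English description precedes it below -/
import Mathlib

section
/- For every integer g ≥ 2, the action of the integral symplectic group Sp(2g,ℤ) on ℝ^{2g} by matrix–vector multiplication is ergodic with respect to Lebesgue measure: every Lebesgue-measurable set A ⊆ ℝ^{2g} satisfying M·A = A for all M ∈ Sp(2g,ℤ) is either Lebesgue-null or has Lebesgue-null complement. -/
open Filter Topology Matrix MeasureTheory

theorem no_quad {r : ℝ} (hr : Transcendental ℤ r) (a b d : ℤ)
    (h : (a:ℝ) * r ^ 2 - d * r + b = 0) : a = 0 ∧ b = 0 ∧ d = 0 := by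
  by_contra hne
  apply hr
  refine ⟨Polynomial.C a * Polynomial.X ^ 2 - Polynomial.C d * Polynomial.X + Polynomial.C b, ?_, ?_⟩
  · intro h0
    apply hne
    have h1 := congrArg (fun p => Polynomial.coeff p 0) h0
    have h2 := congrArg (fun p => Polynomial.coeff p 1) h0
    have h3 := congrArg (fun p => Polynomial.coeff p 2) h0
    simp only [Polynomial.coeff_add, Polynomial.coeff_sub, Polynomial.coeff_C_mul,
      Polynomial.coeff_X, Polynomial.coeff_C, Polynomial.coeff_X_pow, Polynomial.coeff_zero]
      at h1 h2 h3
    norm_num at h1 h2 h3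
    exact ⟨h3, h1, h2⟩
  · simpa using h

theorem closed_line {E : Type*} [NormedAddCommGroup E] [NormedSpace ℝ E] [ProperSpace E]
    (H : AddSubgroup E) (hH : IsClosed (H : Set E)) (h : ℕ → E) (hmem : ∀ k, h k ∈ H)
    (hne : ∀ k, h k ≠ 0) (hlim : Tendsto h atTop (𝓝 0)) :
    ∃ u : E, u ≠ 0 ∧ ∀ s : ℝ, s • u ∈ H := by
  have hbd : ∀ k, (‖h k‖⁻¹ • h k) ∈ Metric.sphere (0:E) 1 := by
    intro k
    have := norm_ne_zero_iff.2 (hne k)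
    simp [norm_smul, this]
  obtain ⟨u, hu, φ, hφ, hlu⟩ := (isCompact_sphere (0:E) 1).tendsto_subseq hbd
  have hu1 : ‖u‖ = 1 := by simpa using hu
  refine ⟨u, by rintro rfl; simp at hu1, fun s => ?_⟩
  have hl0 : Tendsto (h ∘ φ) atTop (𝓝 0) := hlim.comp hφ.tendsto_atTop
  have key : Tendsto (fun k => ⌊s / ‖h (φ k)‖⌋ • h (φ k)) atTop (𝓝 (s • u)) := by
    have h1 : Tendsto (fun k => s • (‖h (φ k)‖⁻¹ • h (φ k))) atTop (𝓝 (s • u)) :=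
      hlu.const_smul s
    have h2 : Tendsto (fun k => Int.fract (s / ‖h (φ k)‖) • h (φ k)) atTop (𝓝 0) := by
      refine squeeze_zero_norm (fun k => ?_) (tendsto_zero_iff_norm_tendsto_zero.1 hl0)
      rw [norm_smul, Real.norm_eq_abs, abs_of_nonneg (Int.fract_nonneg _)]
      exact mul_le_of_le_one_left (norm_nonneg _) (Int.fract_lt_one _).le
    have h3 := h1.sub h2
    rw [sub_zero] at h3
    refine h3.congr fun k => ?_
    rw [smul_smul, ← sub_smul, ← div_eq_mul_inv, Int.self_sub_fract, Int.cast_smul_eq_zsmul]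
  exact hH.mem_of_tendsto key (Eventually.of_forall fun k => H.zsmul_mem (hmem _) _)

theorem kron (H : AddSubgroup (ℝ × ℝ)) (hH : IsClosed (H : Set (ℝ × ℝ))) {r : ℝ}
    (hr : Transcendental ℤ r) (h1 : ((1:ℝ), (0:ℝ)) ∈ H) (h2 : ((0:ℝ), (1:ℝ)) ∈ H)
    (h3 : (r, r⁻¹) ∈ H) : ∀ z, z ∈ H := by
  have hr0 : r ≠ 0 := by
    rintro rfl
    exact hr isAlgebraic_zero
  have hint : ∀ m n : ℤ, ((m:ℝ), (n:ℝ)) ∈ H := by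
    intro m n
    have := H.add_mem (H.zsmul_mem h1 m) (H.zsmul_mem h2 n)
    simpa using this
  let x : ℕ → ℝ × ℝ := fun n => (Int.fract (n * r), Int.fract (n * r⁻¹))
  have hxH : ∀ n, x n ∈ H := by
    intro n
    have := H.sub_mem (H.nsmul_mem h3 n) (hint ⌊n * r⌋ ⌊n * r⁻¹⌋)
    have e : x n = n • (r, r⁻¹) - ((⌊n * r⌋ : ℝ), (⌊n * r⁻¹⌋ : ℝ)) := by
      ext
      · simp only [x, Int.fract, Prod.fst_sub, Prod.smul_mk, nsmul_eq_mul]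
      · simp only [x, Int.fract, Prod.snd_sub, Prod.smul_mk, nsmul_eq_mul]
    rw [e]
    exact this
  have hxinj : Function.Injective x := by
    intro m n hmn
    have h := congrArg Prod.fst hmn
    simp only [x] at h
    obtain ⟨z, hz⟩ := Int.fract_eq_fract.1 h
    have := no_quad hr 0 (-z) (-((m:ℤ) - n)) (by push_cast; linarith)
    omega
  have hxb : ∀ n, x n ∈ Set.Icc (0:ℝ) 1 ×ˢ Set.Icc (0:ℝ) 1 := fun n =>
    ⟨⟨Int.fract_nonneg _, (Int.fract_lt_one _).le⟩, ⟨Int.fract_nonneg _, (Int.fract_lt_one _).le⟩⟩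
  obtain ⟨y, -, φ, hφ, hy⟩ := (isCompact_Icc.prod isCompact_Icc).tendsto_subseq hxb
  obtain ⟨u, hu, hline⟩ := closed_line H hH (fun k => x (φ (k+1)) - x (φ k))
    (fun k => H.sub_mem (hxH _) (hxH _))
    (fun k h => by
      have := hφ.injective (hxinj (sub_eq_zero.1 h))
      omega)
    (by simpa using (hy.comp (tendsto_add_atTop_nat 1)).sub hy)
  obtain ⟨u1, u2⟩ := u
  let f : ℝ × ℝ →+ ℝ := AddMonoidHom.mk' (fun z => u2 * z.1 - u1 * z.2) (by
    intro a b; simp; ring)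
  have hf : ∀ z, f z = u2 * z.1 - u1 * z.2 := fun z => rfl
  have hN : u1 ^ 2 + u2 ^ 2 ≠ 0 := by
    intro h
    apply hu
    have : u1 = 0 := by nlinarith [sq_nonneg u1, sq_nonneg u2]
    have : u2 = 0 := by nlinarith [sq_nonneg u1, sq_nonneg u2]
    simp [*]
  rcases (H.map f).dense_or_cyclic with hd | ⟨c, hc⟩
  · intro z
    let w : ℝ × ℝ := (u2 / (u1 ^ 2 + u2 ^ 2), -u1 / (u1 ^ 2 + u2 ^ 2))
    have hcl : IsClosed {t : ℝ | z - (f z - t) • w ∈ H} :=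
      hH.preimage (by fun_prop)
    have hsub : ((H.map f : AddSubgroup ℝ) : Set ℝ) ⊆ {t : ℝ | z - (f z - t) • w ∈ H} := by
      rintro _ ⟨h, hh, rfl⟩
      have hl := hline ((u1 * (z.1 - h.1) + u2 * (z.2 - h.2)) / (u1 ^ 2 + u2 ^ 2))
      have := H.add_mem hh hl
      show z - (f z - f h) • w ∈ H
      convert this using 1
      ext
      · simp [hf, w]; field_simp; ring
      · simp [hf, w]; field_simp; ring
    have hall := hcl.closure_subset_iff.2 hsub (hd (f z))
    simpa using hall
  · exfalso
    have hm : ∀ z ∈ H, ∃ n : ℤ, (n:ℝ) * c = f z := by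
      intro z hz
      have : f z ∈ H.map f := ⟨z, hz, rfl⟩
      rw [hc, AddSubgroup.mem_closure_singleton] at this
      simpa using this
    obtain ⟨a, ha⟩ := hm _ h1
    obtain ⟨b, hb⟩ := hm _ h2
    obtain ⟨d, hd⟩ := hm _ h3
    simp only [hf] at ha hb hd
    have hc0 : c ≠ 0 := by
      rintro rfl
      apply hN
      have h4 : u2 = 0 := by linarith
      have h5 : u1 = 0 := by linarith
      simp [h4, h5]
    have e : c * ((a:ℝ) * r ^ 2 - d * r + b) = 0 := by
      have hu2 : u2 = a * c := by linarith
      have hu1 : u1 = - (b * c) := by linarith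
      rw [hu1, hu2] at hd
      field_simp at hd
      linear_combination (-c) * hd
    obtain ⟨rfl, rfl, rfl⟩ := no_quad hr a b d ((mul_eq_zero.1 e).resolve_left hc0)
    apply hN
    have h4 : u2 = 0 := by simpa using ha.symm
    have h5 : u1 = 0 := by simpa using hb.symm
    simp [h4, h5]

theorem aeconst_of_dense_trans {E : Type*} [NormedAddCommGroup E] [NormedSpace ℝ E]
    [FiniteDimensional ℝ E] [MeasurableSpace E] [BorelSpace E] (μ : Measure E)
    [μ.IsAddHaarMeasure] (A : Set E) (hA : MeasurableSet A) (D : Set E) (hD : Dense D)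
    (hinv : ∀ t ∈ D, ∀ x, t + x ∈ A ↔ x ∈ A) : EventuallyConst A (ae μ) := by
  have : ProperSpace E := FiniteDimensional.proper ℝ E
  have half : ∀ B C : Set E, MeasurableSet B → MeasurableSet C → 
      (∀ t ∈ D, ∀ x, t + x ∈ B → x ∉ C) → ∀ t, ∀ᵐ x ∂μ, t + x ∈ B → x ∉ C := by
    intro B C hB hC hBC t
    have key : ∀ n, μ (((fun x => t + x) ⁻¹' (B ∩ spanningSets μ n)) ∩ C) = 0 := by
      intro n
      let f : E → C(E, E) := fun t => ⟨fun x => t + x, by fun_prop⟩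
      have hf : Continuous f := by
        apply ContinuousMap.continuous_of_continuous_uncurry
        exact continuous_add
      have hfin : μ (B ∩ spanningSets μ n) ≠ ⊤ :=
        (lt_of_le_of_lt (measure_mono Set.inter_subset_right)
          (measure_spanningSets_lt_top μ n)).ne
      have hlim := tendsto_measure_symmDiff_preimage_nhds_zero (μ := μ) (ν := μ) (hf.tendsto t)
        (.of_forall fun s => measurePreserving_add_left μ s) (measurePreserving_add_left μ t)
        (hB.inter (measurableSet_spanningSets μ n)).nullMeasurableSet hfin
      by_contra hne
      have hev := hlim.eventually (gt_mem_nhds (pos_iff_ne_zero.2 hne))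
      obtain ⟨s, hs, hsD⟩ := mem_closure_iff_nhds.1 (hD t) _ hev
      refine absurd hs (not_lt.2 (measure_mono ?_))
      rintro x ⟨hx, hxC⟩
      refine Or.inr ⟨hx, fun h => hBC s hsD x h.1 hxC⟩
    have h2 := ae_all_iff.2 fun n => measure_eq_zero_iff_ae_notMem.1 (key n)
    filter_upwards [h2] with x hx hxB hxC
    exact hx (spanningSetsIndex μ (t + x)) ⟨⟨hxB, mem_spanningSetsIndex μ _⟩, hxC⟩
  refine aeconst_of_forall_preimage_vadd_ae_eq E hA.nullMeasurableSet fun t => ?_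
  have h1 := half A Aᶜ hA hA.compl (fun t ht x hx => by simpa using (hinv t ht x).1 hx) t
  have h2 := half Aᶜ A hA.compl hA (fun t ht x hx h => hx ((hinv t ht x).2 h)) t
  filter_upwards [h1, h2] with x h1 h2
  apply propext
  show t + x ∈ A ↔ x ∈ A
  constructor
  · intro h; simpa using h1 h
  · intro h; by_contra h'; exact h2 h' h

theorem ae_transc (g : ℕ) : ∀ᵐ q : Fin g → ℝ, ∀ i j, i ≠ j → Transcendental ℤ (q j / q i) := by
  rw [ae_all_iff]; intro i
  rw [ae_all_iff]; intro j
  by_cases hij : i = j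
  · simp [hij]
  have hc := Algebraic.countable ℤ ℝ
  have hi : ∀ᵐ q : Fin g → ℝ, q i ≠ 0 := by
    have := Measure.addHaar_submodule volume (LinearMap.ker (LinearMap.proj i : (Fin g → ℝ) →ₗ[ℝ] ℝ))
      (by
        intro h
        have : (Pi.single i 1 : Fin g → ℝ) ∈ LinearMap.ker (LinearMap.proj i : (Fin g → ℝ) →ₗ[ℝ] ℝ) := by
          rw [h]; trivial
        simp at this)
    exact (measure_eq_zero_iff_ae_notMem.1 this).mono fun q hq h => hq (by simpa using h)
  have hall : ∀ᵐ q : Fin g → ℝ, ∀ c ∈ {x : ℝ | IsAlgebraic ℤ x}, q j ≠ c * q i := by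
    rw [ae_ball_iff hc]
    intro c _
    have := Measure.addHaar_submodule volume (LinearMap.ker
      (LinearMap.proj j - c • LinearMap.proj i : (Fin g → ℝ) →ₗ[ℝ] ℝ))
      (by
        intro h
        have : (Pi.single j 1 : Fin g → ℝ) ∈ LinearMap.ker
          (LinearMap.proj j - c • LinearMap.proj i : (Fin g → ℝ) →ₗ[ℝ] ℝ) := by
          rw [h]; trivial
        simp [hij] at this)
    exact (measure_eq_zero_iff_ae_notMem.1 this).mono fun q hq h => hq (by simp [h])
  filter_upwards [hi, hall] with q h1 h2 _ halg
  exact h2 _ halg (by field_simp)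

theorem fubini_const {X : Type*} [MeasurableSpace X] (μ : Measure X) [SFinite μ] [NeZero μ]
    (A : Set (X × X)) (hA : MeasurableSet A)
    (h1 : ∀ᵐ q ∂μ, EventuallyConst {p | (p, q) ∈ A} (ae μ))
    (h2 : ∀ᵐ p ∂μ, EventuallyConst {q | (p, q) ∈ A} (ae μ)) :
    (∀ᵐ z ∂(μ.prod μ), z ∈ A) ∨ (∀ᵐ z ∂(μ.prod μ), z ∉ A) := by
  let B : Set X := {q | μ {p | (p, q) ∈ A} ≠ 0}
  have hB : MeasurableSet B := by
    have := measurable_measure_prodMk_right (μ := μ) hA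
    exact this (measurableSet_singleton 0).compl
  have hAB : ∀ᵐ q ∂μ, ∀ᵐ p ∂μ, ((p, q) ∈ A ↔ q ∈ B) := by
    filter_upwards [h1] with q hq
    rcases eventuallyConst_set.1 hq with h | h
    · have : q ∈ B := by
        intro h0
        have := (measure_eq_zero_iff_ae_notMem.1 h0).and h
        obtain ⟨p, hp⟩ := this.exists
        exact hp.1 hp.2
      filter_upwards [h] with p hp
      exact ⟨fun _ => this, fun _ => hp⟩
    · have : q ∉ B := by
        intro h0
        exact h0 (measure_eq_zero_iff_ae_notMem.2 h)
      filter_upwards [h] with p hp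
      exact ⟨fun h => absurd h hp, fun h => absurd h this⟩
  have hm : MeasurableSet {x : X × X | ((x.2, x.1) ∈ A ↔ x.1 ∈ B)} := by
    have e1 : MeasurableSet {x : X × X | (x.2, x.1) ∈ A} := measurable_swap hA
    have e2 : MeasurableSet {x : X × X | x.1 ∈ B} := measurable_fst hB
    exact (e1.mem.iff e2.mem).setOf
  have hBA := (Measure.ae_ae_comm hm).1 hAB
  obtain ⟨p, hp, hp'⟩ := (h2.and hBA).exists
  rcases eventuallyConst_set.1 hp with h | h
  · left
    rw [Measure.ae_prod_mem_iff_ae_ae_mem hA]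
    have hb : ∀ᵐ q ∂μ, q ∈ B := by
      filter_upwards [h, hp'] with q a b using b.1 a
    filter_upwards [hBA] with p hp
    filter_upwards [hp, hb] with q a b using a.2 b
  · right
    rw [Measure.ae_prod_iff_ae_ae hA.compl]
    have hb : ∀ᵐ q ∂μ, q ∉ B := by
      filter_upwards [h, hp'] with q a b using fun c => a (b.2 c)
    filter_upwards [hBA] with p hp
    filter_upwards [hp, hb] with q a b using fun c => b (a.1 c)
theorem map_single_mulVec (g : ℕ) (i j : Fin g) (q : Fin g → ℝ) :
    (Matrix.single i j (1:ℤ)).map (Int.cast : ℤ → ℝ) *ᵥ q = Pi.single i (q j) := by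
  ext k
  by_cases h : k = i
  · subst h
    simp [Matrix.mulVec, dotProduct, Matrix.single_apply]
  · simp [Matrix.mulVec, dotProduct, Matrix.single_apply, h, Ne.symm h]

theorem slice_const (g : ℕ) (hg : 2 ≤ g) (A : Set ((Fin g → ℝ) × (Fin g → ℝ)))
    (hA : MeasurableSet A)
    (hinv : ∀ S : Matrix (Fin g) (Fin g) ℤ, Sᵀ = S → ∀ p q : Fin g → ℝ,
      (p, q) ∈ A → (S.map (Int.cast : ℤ → ℝ) *ᵥ q + p, q) ∈ A) :
    ∀ᵐ q : Fin g → ℝ, EventuallyConst {p | (p, q) ∈ A} (ae (volume : Measure (Fin g → ℝ))) := by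
  filter_upwards [ae_transc g] with q hq
  have hinv' : ∀ S : Matrix (Fin g) (Fin g) ℤ, Sᵀ = S → ∀ p : Fin g → ℝ,
      ((S.map (Int.cast : ℤ → ℝ) *ᵥ q + p, q) ∈ A ↔ (p, q) ∈ A) := by
    intro S hS p
    refine ⟨fun h => ?_, hinv S hS p q⟩
    have := hinv (-S) (by simp [hS]) _ q h
    have e : (-S).map (Int.cast : ℤ → ℝ) = - S.map (Int.cast : ℤ → ℝ) := by
      ext i j; simp
    rw [e, neg_mulVec, neg_add_cancel_left] at this
    exact this
  let D : AddSubgroup (Fin g → ℝ) :=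
    { carrier := {t | ∀ p, (t + p, q) ∈ A ↔ (p, q) ∈ A}
      zero_mem' := by intro p; simp
      add_mem' := by
        intro a b ha hb p
        rw [add_assoc]
        exact (ha _).trans (hb _)
      neg_mem' := by
        intro a ha p
        have := ha (-a + p)
        rw [add_neg_cancel_left] at this
        exact this.symm }
  have hSD : ∀ S : Matrix (Fin g) (Fin g) ℤ, Sᵀ = S → S.map (Int.cast : ℤ → ℝ) *ᵥ q ∈ D :=
    fun S hS p => hinv' S hS p
  have hdiag : ∀ i, Pi.single i (q i) ∈ D := by
    intro i
    convert hSD (Matrix.single i i 1) (by simp) using 1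
    rw [map_single_mulVec]
  have hoff : ∀ i j, i ≠ j → (Pi.single i (q j) + Pi.single j (q i) : Fin g → ℝ) ∈ D := by
    intro i j hij
    convert hSD (Matrix.single i j 1 + Matrix.single j i 1) (by simp [add_comm]) using 1
    rw [Matrix.map_add _ (by simp), Matrix.add_mulVec,
      map_single_mulVec, map_single_mulVec]
  have hcl : IsClosed (D.topologicalClosure : Set (Fin g → ℝ)) := D.isClosed_topologicalClosure
  have hsub : ∀ x ∈ D, x ∈ D.topologicalClosure := fun x hx => D.le_topologicalClosure hx
  have hsingle : ∀ i (s : ℝ), (Pi.single i s : Fin g → ℝ) ∈ D.topologicalClosure := by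
    intro i s
    obtain ⟨j, hj⟩ : ∃ j : Fin g, j ≠ i := by
      have : Nontrivial (Fin g) := Fin.nontrivial_iff_two_le.2 hg
      exact exists_ne i
    have ht := hq i j hj.symm
    have hi0 : q i ≠ 0 := by
      intro h; rw [h, div_zero] at ht; exact ht isAlgebraic_zero
    have hj0 : q j ≠ 0 := by
      intro h; rw [h, zero_div] at ht; exact ht isAlgebraic_zero
    let f : ℝ × ℝ →+ (Fin g → ℝ) := AddMonoidHom.mk'
      (fun z => Pi.single i (z.1 * q i) + Pi.single j (z.2 * q j)) (by
        intro a b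
        simp only [Prod.fst_add, Prod.snd_add, add_mul, Pi.single_add]
        abel)
    have hf : ∀ z, f z = Pi.single i (z.1 * q i) + Pi.single j (z.2 * q j) := fun z => rfl
    have hfc : Continuous f := by
      have : (f : ℝ × ℝ → (Fin g → ℝ)) =
        fun z => Pi.single i (z.1 * q i) + Pi.single j (z.2 * q j) := rfl
      rw [this]
      have hsc : ∀ k : Fin g, Continuous (fun x : ℝ => (Pi.single k x : Fin g → ℝ)) :=
        fun k => continuous_single (A := fun _ : Fin g => ℝ) k
      have c1 : Continuous (fun z : ℝ × ℝ => (Pi.single i (z.1 * q i) : Fin g → ℝ)) :=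
        (hsc i).comp (continuous_fst.mul continuous_const)
      have c2 : Continuous (fun z : ℝ × ℝ => (Pi.single j (z.2 * q j) : Fin g → ℝ)) :=
        (hsc j).comp (continuous_snd.mul continuous_const)
      exact c1.add c2
    have := kron (D.topologicalClosure.comap f) (hcl.preimage hfc) ht
      (by
        rw [AddSubgroup.mem_comap, hf]
        simpa using hsub _ (hdiag i))
      (by
        rw [AddSubgroup.mem_comap, hf]
        simpa using hsub _ (hdiag j))
      (by
        rw [AddSubgroup.mem_comap, hf]
        have := hsub _ (hoff i j hj.symm)
        simpa [hi0, hj0] using this) (s / q i, 0)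
    rw [AddSubgroup.mem_comap, hf] at this
    simpa [hi0] using this
  have hdense : Dense (D : Set (Fin g → ℝ)) := by
    intro x
    have : x ∈ D.topologicalClosure := by
      rw [← Finset.univ_sum_single x]
      exact AddSubgroup.sum_mem _ fun i _ => hsingle i _
    exact this
  exact aeconst_of_dense_trans volume {p | (p, q) ∈ A}
    (measurable_prodMk_right hA) D hdense (fun t ht x => ht x)

open Matrix MeasureTheory

/-- For `g ≥ 2`, the action of `Sp(2g, ℤ)` (integral matrices `M` with `Mᵀ J M = J`,
acting on `ℝ^{2g}` by matrix-vector multiplication) is ergodic for the Lebesgue measure: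
any invariant measurable set is null or conull. -/
theorem sp2gZ_action_on_R2g_ergodic (g : ℕ) (hg : 2 ≤ g)
    (A : Set ((Fin g ⊕ Fin g) → ℝ)) (hA : MeasurableSet A)
    (hinv : ∀ M : Matrix (Fin g ⊕ Fin g) (Fin g ⊕ Fin g) ℝ,
      (∀ i j, ∃ k : ℤ, M i j = (k : ℝ)) →
      Mᵀ * Matrix.J (Fin g) ℝ * M = Matrix.J (Fin g) ℝ →
      (fun x => M.mulVec x) '' A = A) :
    volume A = 0 ∨ volume Aᶜ = 0 := by
  have hmp := (volume_measurePreserving_sumPiEquivProdPi (fun _ : Fin g ⊕ Fin g => ℝ)).symm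
  set e := (MeasurableEquiv.sumPiEquivProdPi (fun _ : Fin g ⊕ Fin g => ℝ)).symm with he
  have hee : ∀ p q : Fin g → ℝ, e (p, q) = Sum.elim p q := by
    intro p q
    ext i
    rcases i with i | i <;> rfl
  have hA' : MeasurableSet (e ⁻¹' A) := e.measurable hA
  have hmemJ : ∀ M : Matrix (Fin g ⊕ Fin g) (Fin g ⊕ Fin g) ℝ,
      (∀ i j, ∃ k : ℤ, M i j = (k : ℝ)) →
      Mᵀ * Matrix.J (Fin g) ℝ * M = Matrix.J (Fin g) ℝ → ∀ x ∈ A, M *ᵥ x ∈ A := by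
    intro M h1 h2 x hx
    have := hinv M h1 h2
    rw [← this]
    exact ⟨x, hx, rfl⟩
  have hU : ∀ S : Matrix (Fin g) (Fin g) ℤ, Sᵀ = S → ∀ p q : Fin g → ℝ,
      (p, q) ∈ e ⁻¹' A → (S.map (Int.cast : ℤ → ℝ) *ᵥ q + p, q) ∈ e ⁻¹' A := by
    intro S hS p q h
    have hS' : (S.map (Int.cast : ℤ → ℝ))ᵀ = S.map (Int.cast : ℤ → ℝ) := by
      rw [← Matrix.transpose_map, hS]
    have := hmemJ (Matrix.fromBlocks 1 (S.map (Int.cast : ℤ → ℝ)) 0 1) (by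
      rintro (i | i) (j | j)
      · exact ⟨(1 : Matrix (Fin g) (Fin g) ℤ) i j, by simp [Matrix.one_apply]⟩
      · exact ⟨S i j, by simp⟩
      · exact ⟨0, by simp⟩
      · exact ⟨(1 : Matrix (Fin g) (Fin g) ℤ) i j, by simp [Matrix.one_apply]⟩) (by
      simp [Matrix.J, Matrix.fromBlocks_transpose, Matrix.fromBlocks_multiply, hS']) _ h
    rw [hee, Matrix.fromBlocks_mulVec] at this
    rw [Set.mem_preimage, hee]
    simpa [add_comm, Function.comp_def] using this
  have hL : ∀ S : Matrix (Fin g) (Fin g) ℤ, Sᵀ = S → ∀ p q : Fin g → ℝ,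
      (p, q) ∈ Prod.swap ⁻¹' (e ⁻¹' A) →
      (S.map (Int.cast : ℤ → ℝ) *ᵥ q + p, q) ∈ Prod.swap ⁻¹' (e ⁻¹' A) := by
    intro S hS p q h
    have hS' : (S.map (Int.cast : ℤ → ℝ))ᵀ = S.map (Int.cast : ℤ → ℝ) := by
      rw [← Matrix.transpose_map, hS]
    have := hmemJ (Matrix.fromBlocks 1 0 (S.map (Int.cast : ℤ → ℝ)) 1) (by
      rintro (i | i) (j | j)
      · exact ⟨(1 : Matrix (Fin g) (Fin g) ℤ) i j, by simp [Matrix.one_apply]⟩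
      · exact ⟨0, by simp⟩
      · exact ⟨S i j, by simp⟩
      · exact ⟨(1 : Matrix (Fin g) (Fin g) ℤ) i j, by simp [Matrix.one_apply]⟩) (by
      simp [Matrix.J, Matrix.fromBlocks_transpose, Matrix.fromBlocks_multiply, hS']) _ h
    rw [Prod.swap_prod_mk, hee, Matrix.fromBlocks_mulVec] at this
    rw [Set.mem_preimage, Set.mem_preimage, Prod.swap_prod_mk, hee]
    simpa [Function.comp_def] using this
  have h1 := slice_const g hg _ hA' hU
  have h2 := slice_const g hg _ (measurable_swap hA') hL
  have h3 := fubini_const (volume : Measure (Fin g → ℝ)) (e ⁻¹' A) hA' h1 h2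
  rw [← hmp.measure_preimage_equiv A, ← hmp.measure_preimage_equiv Aᶜ]
  rcases h3 with h | h
  · right
    exact h
  · left
    exact measure_eq_zero_iff_ae_notMem.2 h
end

section
/- For every integer g ≥ 2, the diagonal action of Sp(2g,ℤ) on (ℝ/ℤ)^{2g} × ℝ^{2g}, where M ∈ Sp(2g,ℤ) sends (x mod ℤ^{2g}, y) to (Mx mod ℤ^{2g}, My), is ergodic with respect to the product of the Haar measure on the torus (ℝ/ℤ)^{2g} and the Lebesgue measure on ℝ^{2g}. -/
open Matrix MeasureTheory

open scoped Pointwise in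
theorem aux_steinhaus {E : Type*} [NormedAddCommGroup E] [NormedSpace ℝ E] [FiniteDimensional ℝ E]
    [MeasurableSpace E] [BorelSpace E] (μ : Measure E) [μ.IsAddHaarMeasure]
    (S : Set E) (hS : MeasurableSet S) (D : Set E) (hD : Dense D)
    (hinv : ∀ d ∈ D, ∀ u, u ∈ S ↔ u + d ∈ S) : μ S = 0 ∨ μ Sᶜ = 0 := by
  by_contra hcon
  push Not at hcon
  obtain ⟨h1, h2⟩ := hcon
  have hmp := measurePreserving_prod_add μ μ
  have hex : ∃ b, μ {a | a ∈ S ∧ a + b ∈ Sᶜ} ≠ 0 := by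
    by_contra hall
    push Not at hall
    have hm : MeasurableSet ((fun z : E × E => (z.1, z.1 + z.2)) ⁻¹' (S ×ˢ Sᶜ)) :=
      hmp.measurable (hS.prod hS.compl)
    have h3 := hmp.measure_preimage (hS.prod hS.compl).nullMeasurableSet
    rw [Measure.prod_prod, Measure.prod_apply_symm hm] at h3
    have h4 : ∀ y, μ ((fun x => (x, y)) ⁻¹' ((fun z : E × E => (z.1, z.1 + z.2)) ⁻¹' (S ×ˢ Sᶜ))) = 0 := 
      fun y => hall y
    simp only [h4, lintegral_zero] at h3
    exact (mul_ne_zero h1 h2) h3.symm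
  obtain ⟨b, hb⟩ := hex
  have hKm : MeasurableSet {a | a ∈ S ∧ a + b ∈ Sᶜ} :=
    hS.inter ((measurable_add_const b) hS.compl)
  have hn := Measure.sub_mem_nhds_zero_of_addHaar_pos μ _ hKm (pos_iff_ne_zero.2 hb)
  have hn2 : (fun d => d - b) ⁻¹' ({a | a ∈ S ∧ a + b ∈ Sᶜ} - {a | a ∈ S ∧ a + b ∈ Sᶜ}) ∈ nhds b := by
    apply ContinuousAt.preimage_mem_nhds (by fun_prop)
    simpa using hn
  obtain ⟨d, hdD, hd⟩ := hD.inter_nhds_nonempty hn2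
  obtain ⟨k, hk, k', hk', hkk⟩ := Set.mem_sub.1 hd
  apply hk.2
  have : k + b = k' + d := by
    have : d = k - k' + b := by rw [hkk]; simp
    rw [this]; abel
  rw [this]
  exact (hinv d hdD k').1 hk'.1

theorem aux_line {E : Type*} [NormedAddCommGroup E] [NormedSpace ℝ E] [FiniteDimensional ℝ E]
    [MeasurableSpace E] [BorelSpace E] (μ : Measure E) [μ.IsAddHaarMeasure]
    (s : Set E) (hs : MeasurableSet s) (e : E)
    (h : ∀ y, {t : ℝ | y + t • e ∉ s}.Countable) : ∀ᵐ y ∂μ, y ∈ s := by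
  refine ae_mem_of_ae_add_linearMap_mem (LinearMap.toSpanSingleton ℝ E e) volume μ hs ?_
  intro y
  exact (h y).measure_zero _

/-- The largest linear subspace contained in a subgroup. -/
def auxV {E : Type*} [AddCommGroup E] [Module ℝ E] (H : AddSubgroup E) : Submodule ℝ E where
  carrier := {v | ∀ t : ℝ, t • v ∈ H}
  zero_mem' := fun t => by simp [H.zero_mem]
  add_mem' := fun ha hb t => by rw [smul_add]; exact H.add_mem (ha t) (hb t)
  smul_mem' := fun c x hx t => by rw [smul_smul]; exact hx _

theorem aux_discrete {E : Type*} [NormedAddCommGroup E] [NormedSpace ℝ E] [FiniteDimensional ℝ E]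
    (H : AddSubgroup E) (hH : IsClosed (H : Set E)) (W : Submodule ℝ E) 
    (hW : Disjoint (auxV H) W) : ∃ ε > 0, ∀ w ∈ H, w ∈ W → ‖w‖ < ε → w = 0 := by
  by_contra hcon
  push Not at hcon
  have hseq : ∀ n : ℕ, ∃ w ∈ H, w ∈ W ∧ ‖w‖ < 1 / ((n : ℝ) + 1) ∧ w ≠ 0 := fun n =>
    hcon _ (by positivity)
  choose w hwH hwW hwn hw0 using hseq
  have hnz : ∀ n, ‖w n‖ ≠ 0 := fun n => norm_ne_zero_iff.2 (hw0 n)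
  have hproper : ProperSpace E := FiniteDimensional.proper ℝ E
  obtain ⟨u, hu, φ, hφ, hlim⟩ := (isCompact_sphere (0 : E) 1).tendsto_subseq
    (x := fun n => ‖w n‖⁻¹ • w n) (fun n => by
      simp [norm_smul, hnz n])
  have hw : Filter.Tendsto (fun n => ‖w (φ n)‖) Filter.atTop (nhds 0) := by
    refine Filter.Tendsto.comp (g := fun n => ‖w n‖) ?_ hφ.tendsto_atTop
    exact squeeze_zero (fun n => norm_nonneg _) (fun n => (hwn n).le) 
      tendsto_one_div_add_atTop_nhds_zero_nat
  have huW : u ∈ W := by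
    have hc : IsClosed (W : Set E) := W.closed_of_finiteDimensional
    exact hc.mem_of_tendsto hlim (Filter.Eventually.of_forall fun n => W.smul_mem _ (hwW _))
  have huV : u ∈ auxV H := by
    intro t
    have hmem : ∀ n, (⌊t / ‖w (φ n)‖⌋ : ℤ) • w (φ n) ∈ (H : Set E) := fun n => 
      H.zsmul_mem (hwH _) _
    refine hH.mem_of_tendsto (b := Filter.atTop) (f := fun n => (⌊t / ‖w (φ n)‖⌋ : ℤ) • w (φ n)) ?_ 
      (Filter.Eventually.of_forall hmem)
    have h1 : Filter.Tendsto (fun n => t • (‖w (φ n)‖⁻¹ • w (φ n))) Filter.atTop (nhds (t • u)) :=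
      hlim.const_smul t
    have h2 : Filter.Tendsto (fun n => Int.fract (t / ‖w (φ n)‖) • w (φ n)) Filter.atTop (nhds 0) := by
      refine squeeze_zero_norm (fun n => ?_) hw
      rw [norm_smul, Real.norm_eq_abs, abs_of_nonneg (Int.fract_nonneg _)]
      exact mul_le_of_le_one_left (norm_nonneg _) (Int.fract_lt_one _).le
    have h3 := h1.sub h2
    rw [sub_zero] at h3
    refine h3.congr fun n => ?_
    rw [smul_smul, ← sub_smul, ← div_eq_mul_inv, Int.self_sub_fract, Int.cast_smul_eq_zsmul]
  have : u = 0 := (Submodule.disjoint_def.1 hW) u huV huW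
  simp [this] at hu

theorem aux_closed {E : Type*} [NormedAddCommGroup E] [NormedSpace ℝ E] [FiniteDimensional ℝ E]
    (H : AddSubgroup E) (hH : IsClosed (H : Set E)) 
    (h : ∀ ℓ : E →ₗ[ℝ] ℝ, (∀ x ∈ H, ∃ n : ℤ, ℓ x = n) → ℓ = 0) : H = ⊤ := by
  obtain ⟨W, hW⟩ := (auxV H).exists_isCompl
  obtain ⟨ε, hε, hd⟩ := aux_discrete H hH W hW.disjoint
  have hVH : ∀ v ∈ auxV H, v ∈ H := fun v hv => by simpa using hv 1
  -- work with the subgroup of W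
  let U : Submodule ℝ E := Submodule.span ℝ ((H : Set E) ∩ W)
  have hUW : U ≤ W := Submodule.span_le.2 Set.inter_subset_right
  have hdec : ∀ x ∈ H, ∃ v ∈ auxV H, ∃ y ∈ (H : Set E) ∩ W, x = v + y := by
    intro x hx
    have : x ∈ auxV H ⊔ W := by rw [hW.sup_eq_top]; trivial
    obtain ⟨v, hv, y, hy, rfl⟩ := Submodule.mem_sup.1 this
    exact ⟨v, hv, y, ⟨by simpa using H.sub_mem hx (hVH v hv), hy⟩, rfl⟩
  have htop : auxV H ⊔ U = ⊤ := by
    by_contra hne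
    obtain ⟨ℓ, hℓ, hle⟩ := Submodule.exists_le_ker_of_lt_top _ (lt_top_iff_ne_top.2 hne)
    apply hℓ
    apply h
    intro x hx
    obtain ⟨v, hv, y, hy, rfl⟩ := hdec x hx
    refine ⟨0, ?_⟩
    have : v + y ∈ LinearMap.ker ℓ := hle (Submodule.add_mem_sup hv (Submodule.subset_span hy))
    simpa using this
  have hcompl : IsCompl U (auxV H) := by
    refine ⟨(hW.disjoint.mono_right hUW).symm, ?_⟩
    rw [codisjoint_iff, sup_comm]; exact htop
  let L : Submodule ℤ U := (AddSubgroup.toIntSubmodule H).comap (U.subtype.restrictScalars ℤ)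
  have hLmem : ∀ x : U, x ∈ L ↔ (x : E) ∈ H := fun x => Iff.rfl
  have hdisc : DiscreteTopology L := by
    apply DiscreteTopology.of_forall_le_norm hε
    intro x hx
    by_contra hlt
    push Not at hlt
    have := hd x.1.1 ((hLmem _).1 x.2) (hUW x.1.2) hlt
    apply hx
    ext; simpa using this
  have hZ : IsZLattice ℝ L := ⟨by
    rw [← (Submodule.map_injective_of_injective U.injective_subtype).eq_iff, Submodule.map_span,
      Submodule.map_top, Submodule.range_subtype]
    congr 1
    ext x
    constructor
    · rintro ⟨y, hy, rfl⟩
      exact ⟨hy, hUW y.2⟩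
    · intro hx
      exact ⟨⟨x, Submodule.subset_span hx⟩, hx.1, rfl⟩⟩
  have hfree : Module.Free ℤ L := ZLattice.module_free ℝ L
  let b := Module.Free.chooseBasis ℤ L
  let bR := b.ofZLatticeBasis ℝ L
  have hemp : ∀ i : Module.Free.ChooseBasisIndex ℤ L, False := by
    intro i
    let ℓ : E →ₗ[ℝ] ℝ := (bR.coord i).comp (U.projectionOnto (auxV H) hcompl)
    have h0 : ℓ = 0 := by
      apply h
      intro x hx
      obtain ⟨v, hv, y, hy, rfl⟩ := hdec x hx
      have hyU : y ∈ U := Submodule.subset_span hy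
      have hpv : U.projectionOnto (auxV H) hcompl (v + y) = ⟨y, hyU⟩ := by
        rw [map_add, Submodule.projectionOnto_apply_right hcompl ⟨v, hv⟩]
        simpa using Submodule.projectionOnto_apply_left hcompl ⟨y, hyU⟩
      refine ⟨b.repr ⟨⟨y, hyU⟩, hy.1⟩ i, ?_⟩
      simp only [ℓ, LinearMap.comp_apply, hpv]
      exact b.ofZLatticeBasis_repr_apply ℝ L ⟨⟨y, hyU⟩, hy.1⟩ i
    have h1 : ℓ (bR i : U) = 1 := by
      simp only [ℓ, LinearMap.comp_apply, Submodule.projectionOnto_apply_left hcompl]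
      simp
    rw [h0] at h1
    simp at h1
  have hU : U = ⊥ := by
    rw [Submodule.eq_bot_iff]
    intro x hx
    have : IsEmpty (Module.Free.ChooseBasisIndex ℤ L) := ⟨hemp⟩
    have h2 := bR.ext_elem_iff (x := ⟨x, hx⟩) (y := 0)
    have := h2.2 (fun i => (hemp i).elim)
    simpa using congrArg Subtype.val this
  rw [hU, sup_bot_eq] at htop
  rw [eq_top_iff]
  intro x _
  exact hVH x (htop ▸ Submodule.mem_top)

instance auxHaar (g : ℕ) : (volume : Measure ((Fin g → ℝ) × (Fin g → ℝ))).IsAddHaarMeasure :=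
  Measure.prod.instIsAddHaarMeasure volume volume

theorem aux_quad (c2 c1 c0 : ℝ) (h : c2 ≠ 0 ∨ c1 ≠ 0) :
    {t : ℝ | c2 * t ^ 2 + c1 * t + c0 = 0}.Countable := by
  have hp : (Polynomial.C c2 * Polynomial.X ^ 2 + Polynomial.C c1 * Polynomial.X
      + Polynomial.C c0 : Polynomial ℝ) ≠ 0 := by
    intro h0
    have e2 := congrArg (fun p => Polynomial.coeff p 2) h0
    have e1 := congrArg (fun p => Polynomial.coeff p 1) h0
    simp [Polynomial.coeff_C] at e1 e2
    tauto
  refine (Set.Finite.subset (Polynomial.finite_setOfPred_isRoot hp) ?_).countable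
  intro t ht
  simpa using ht

theorem aux_generic (g : ℕ) (i j : Fin g) (hij : i ≠ j) :
    ∀ᵐ v : (Fin g → ℝ) × (Fin g → ℝ), v.2 i ≠ 0 ∧ v.2 j ≠ 0 ∧ ∀ a b m k l : ℤ,
      (a : ℝ) * v.1 j * v.2 i * v.2 j + b * v.1 i * v.2 i * v.2 j + (m - a * v.1 i) * v.2 j ^ 2
        + (k - b * v.1 j) * v.2 i ^ 2 = l * v.2 i * v.2 j → a = 0 ∧ b = 0 ∧ m = 0 ∧ k = 0 := by
  have hq : ∀ i : Fin g, ∀ᵐ v : (Fin g → ℝ) × (Fin g → ℝ), v.2 i ≠ 0 := by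
    intro i
    refine aux_line (E := (Fin g → ℝ) × (Fin g → ℝ)) volume {v | v.2 i ≠ 0} ?_ (0, Pi.single i 1) ?_
    · exact (measurableSet_eq_fun (by fun_prop) (by fun_prop)).compl
    · intro y
      refine (aux_quad 0 1 (y.2 i) (by simp)).mono ?_
      intro t ht
      simp at ht ⊢
      linarith
  have hlin : ∀ a b : ℤ, (a ≠ 0 ∨ b ≠ 0) → ∀ᵐ v : (Fin g → ℝ) × (Fin g → ℝ), 
      (b : ℝ) * v.2 i - a * v.2 j ≠ 0 := by
    intro a b hab
    by_cases hb : b = 0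
    · have ha : (a : ℝ) ≠ 0 := by simpa [hb] using hab
      filter_upwards [hq j] with v hv
      simp [hb, ha, hv]
    · refine aux_line (E := (Fin g → ℝ) × (Fin g → ℝ)) volume {v | (b : ℝ) * v.2 i - a * v.2 j ≠ 0} ?_ (0, Pi.single i 1) ?_
      · exact (measurableSet_eq_fun (by fun_prop) (by fun_prop)).compl
      · intro y
        refine (aux_quad 0 b (b * y.2 i - a * y.2 j) (by simp [hb])).mono ?_
        intro t ht
        simp [hij.symm] at ht ⊢
        linarith
  have hmain : ∀ a b m k l : ℤ, ¬ (a = 0 ∧ b = 0 ∧ m = 0 ∧ k = 0) → 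
      ∀ᵐ v : (Fin g → ℝ) × (Fin g → ℝ), ¬ ((a : ℝ) * v.1 j * v.2 i * v.2 j
        + b * v.1 i * v.2 i * v.2 j + (m - a * v.1 i) * v.2 j ^ 2
        + (k - b * v.1 j) * v.2 i ^ 2 = l * v.2 i * v.2 j) := by
    intro a b m k l hne
    by_cases hab : a ≠ 0 ∨ b ≠ 0
    · have key : ∀ᵐ v : (Fin g → ℝ) × (Fin g → ℝ), v ∈ 
          {v : (Fin g → ℝ) × (Fin g → ℝ) | ¬ (v.2 j * ((b : ℝ) * v.2 i - a * v.2 j) ≠ 0 ∧ 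
          ((a : ℝ) * v.1 j * v.2 i * v.2 j
          + b * v.1 i * v.2 i * v.2 j + (m - a * v.1 i) * v.2 j ^ 2
          + (k - b * v.1 j) * v.2 i ^ 2 = l * v.2 i * v.2 j))} := by
        refine aux_line (E := (Fin g → ℝ) × (Fin g → ℝ)) volume _ ?_ (Pi.single i 1, 0) ?_
        · refine MeasurableSet.compl (MeasurableSet.inter (MeasurableSet.compl ?_) ?_)
          · exact (measurableSet_eq_fun (by fun_prop) (by fun_prop))
          · exact (measurableSet_eq_fun (by fun_prop) (by fun_prop))
        · intro y
          by_cases h0 : y.2 j * ((b : ℝ) * y.2 i - a * y.2 j) = 0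
          · convert Set.countable_empty
            ext t
            simp only [Set.mem_ofPred_eq, Set.mem_empty_iff_false, iff_false, not_not]
            intro hh
            exact hh.1 (by simpa using h0)
          · refine (aux_quad 0 (y.2 j * ((b : ℝ) * y.2 i - a * y.2 j)) 
              ((a : ℝ) * y.1 j * y.2 i * y.2 j
                + b * y.1 i * y.2 i * y.2 j + (m - a * y.1 i) * y.2 j ^ 2
                + (k - b * y.1 j) * y.2 i ^ 2 - l * y.2 i * y.2 j) (Or.inr h0)).mono ?_
            intro t ht
            have h1 := (not_not.1 ht).2
            simp [hij.symm] at h1 ⊢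
            linarith
      filter_upwards [key, hlin a b hab, hq j] with v h1 h2 h3 h4
      exact h1 ⟨mul_ne_zero h3 h2, h4⟩
    · push Not at hab
      obtain ⟨rfl, rfl⟩ := hab
      have key : ∀ v : (Fin g → ℝ) × (Fin g → ℝ), (m : ℝ) * v.2 j ^ 2 + (-l * v.2 i) * v.2 j 
          + k * v.2 i ^ 2 = 0 ↔ (((0 : ℤ) : ℝ) * v.1 j * v.2 i * v.2 j
        + ((0 : ℤ) : ℝ) * v.1 i * v.2 i * v.2 j + (m - ((0 : ℤ) : ℝ) * v.1 i) * v.2 j ^ 2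
        + (k - ((0 : ℤ) : ℝ) * v.1 j) * v.2 i ^ 2 = l * v.2 i * v.2 j) := by
        intro v
        push_cast
        constructor <;> intro h <;> linarith
      simp only [← key]
      have hmeas : MeasurableSet {v : (Fin g → ℝ) × (Fin g → ℝ) | 
          ¬ ((m : ℝ) * v.2 j ^ 2 + (-l * v.2 i) * v.2 j + k * v.2 i ^ 2 = 0)} :=
        (measurableSet_eq_fun (by fun_prop) (by fun_prop)).compl
      by_cases hm : m = 0
      · have hk : (k : ℝ) ≠ 0 := by
          simp [hm] at hne
          exact_mod_cast hne
        refine aux_line (E := (Fin g → ℝ) × (Fin g → ℝ)) volume _ hmeas (0, Pi.single i 1) ?_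
        intro y
        refine (aux_quad k (2 * k * y.2 i - l * y.2 j) (m * y.2 j ^ 2 + (-l * y.2 i) * y.2 j 
          + k * y.2 i ^ 2) (Or.inl hk)).mono ?_
        intro t ht
        have h1 := not_not.1 ht
        simp [hij.symm] at h1 ⊢
        linarith
      · refine aux_line (E := (Fin g → ℝ) × (Fin g → ℝ)) volume _ hmeas (0, Pi.single j 1) ?_
        intro y
        refine (aux_quad m (2 * m * y.2 j - l * y.2 i) (m * y.2 j ^ 2 + (-l * y.2 i) * y.2 j 
          + k * y.2 i ^ 2) (Or.inl (by exact_mod_cast hm))).mono ?_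
        intro t ht
        have h1 := not_not.1 ht
        simp [hij] at h1 ⊢
        linarith
  have hall : ∀ᵐ v : (Fin g → ℝ) × (Fin g → ℝ), ∀ a b m k l : ℤ, 
      ¬ (a = 0 ∧ b = 0 ∧ m = 0 ∧ k = 0) → ¬ ((a : ℝ) * v.1 j * v.2 i * v.2 j
        + b * v.1 i * v.2 i * v.2 j + (m - a * v.1 i) * v.2 j ^ 2
        + (k - b * v.1 j) * v.2 i ^ 2 = l * v.2 i * v.2 j) := by
    simp only [ae_all_iff]
    exact hmain
  filter_upwards [hall, hq i, hq j] with v h1 h2 h3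
  refine ⟨h2, h3, fun a b m k l h4 => ?_⟩
  by_contra h5
  exact h1 a b m k l h5 h4

theorem aux_dense (g : ℕ) (hg : 2 ≤ g) : ∀ᵐ v : (Fin g → ℝ) × (Fin g → ℝ),
    ∀ D : AddSubgroup ((Fin g → ℝ) × (Fin g → ℝ)), 
      (∀ i, ((Pi.single i 1, 0) : (Fin g → ℝ) × (Fin g → ℝ)) ∈ D) →
      (∀ S : Matrix (Fin g) (Fin g) ℝ, (∀ i j, ∃ k : ℤ, S i j = k) → Sᵀ = S → 
        (S *ᵥ v.1, S *ᵥ v.2) ∈ D) → Dense (D : Set ((Fin g → ℝ) × (Fin g → ℝ))) := by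
  have hgen : ∀ᵐ v : (Fin g → ℝ) × (Fin g → ℝ), ∀ i j : Fin g, i ≠ j → 
      (v.2 i ≠ 0 ∧ v.2 j ≠ 0 ∧ ∀ a b m k l : ℤ,
      (a : ℝ) * v.1 j * v.2 i * v.2 j + b * v.1 i * v.2 i * v.2 j + (m - a * v.1 i) * v.2 j ^ 2
        + (k - b * v.1 j) * v.2 i ^ 2 = l * v.2 i * v.2 j → a = 0 ∧ b = 0 ∧ m = 0 ∧ k = 0) := by
    simp only [ae_all_iff]
    exact fun i j hij => aux_generic g i j hij
  filter_upwards [hgen] with v hv D hD1 hD2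
  have htop : D.topologicalClosure = ⊤ := by
    apply aux_closed _ D.isClosed_topologicalClosure
    intro ℓ hℓ
    replace hℓ : ∀ x ∈ D, ∃ n : ℤ, ℓ x = n := fun x hx => hℓ x (D.le_topologicalClosure hx)
    let f1 : Fin g → ℝ := fun i => ℓ (Pi.single i 1, 0)
    let f2 : Fin g → ℝ := fun i => ℓ (0, Pi.single i 1)
    have hs1 : ∀ (i : Fin g) (t : ℝ), ℓ (Pi.single i t, 0) = t * f1 i := by
      intro i t
      have : ((Pi.single i t, 0) : (Fin g → ℝ) × (Fin g → ℝ)) = t • (Pi.single i 1, 0) := by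
        ext <;> simp [Pi.single_apply]
      rw [this, map_smul, smul_eq_mul]
    have hs2 : ∀ (i : Fin g) (t : ℝ), ℓ (0, Pi.single i t) = t * f2 i := by
      intro i t
      have : ((0, Pi.single i t) : (Fin g → ℝ) × (Fin g → ℝ)) = t • (0, Pi.single i 1) := by
        ext <;> simp [Pi.single_apply]
      rw [this, map_smul, smul_eq_mul]
    -- diagonal elementary matrices
    have hdiag : ∀ i : Fin g, ∃ n : ℤ, f1 i * v.1 i + f2 i * v.2 i = n := by
      intro i
      obtain ⟨n, hn⟩ := hℓ _ (hD2 (Matrix.single i i 1) (by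
        intro a b
        by_cases h : i = a ∧ i = b
        · exact ⟨1, by simp [← h.1, ← h.2]⟩
        · exact ⟨0, by simp [Matrix.single_apply, h]⟩) (by simp))
      refine ⟨n, ?_⟩
      rw [← hn]
      have e : ∀ w : Fin g → ℝ, Matrix.single i i (1 : ℝ) *ᵥ w = Pi.single i (w i) := by
        intro w; ext a
        simp [Matrix.single_mulVec, Function.update_apply, Pi.single_apply]
      have e2 : ((Pi.single i (v.1 i), Pi.single i (v.2 i)) : (Fin g → ℝ) × (Fin g → ℝ)) =
        (Pi.single i (v.1 i), 0) + (0, Pi.single i (v.2 i)) := by simp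
      rw [e, e, e2, map_add, hs1, hs2]
      ring
    have hoff : ∀ i j : Fin g, i ≠ j → ∃ n : ℤ, 
        f1 i * v.1 j + f1 j * v.1 i + f2 i * v.2 j + f2 j * v.2 i = n := by
      intro i j hij
      obtain ⟨n, hn⟩ := hℓ _ (hD2 (Matrix.single i j 1 + Matrix.single j i 1) (by
        intro a b
        refine ⟨(if i = a ∧ j = b then 1 else 0) + (if j = a ∧ i = b then 1 else 0), ?_⟩
        simp [Matrix.single_apply]) (by simp [add_comm]))
      refine ⟨n, ?_⟩
      rw [← hn]
      have e : ∀ (i j : Fin g) (w : Fin g → ℝ), 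
          Matrix.single i j (1 : ℝ) *ᵥ w = Pi.single i (w j) := by
        intro i j w; ext a
        simp [Matrix.single_mulVec, Function.update_apply, Pi.single_apply]
      have e2 : ((Pi.single i (v.1 j) + Pi.single j (v.1 i), 
          Pi.single i (v.2 j) + Pi.single j (v.2 i)) : (Fin g → ℝ) × (Fin g → ℝ)) =
        ((Pi.single i (v.1 j), 0) + (Pi.single j (v.1 i), 0)) + 
        ((0, Pi.single i (v.2 j)) + (0, Pi.single j (v.2 i))) := by simp
      rw [Matrix.add_mulVec, Matrix.add_mulVec, e, e, e, e, e2, map_add, map_add, map_add, 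
        hs1, hs1, hs2, hs2]
      ring
    have hzero : ∀ i, f1 i = 0 ∧ f2 i = 0 := by
      intro i
      obtain ⟨j, hij⟩ : ∃ j : Fin g, i ≠ j := by
        have : Nontrivial (Fin g) := Fin.nontrivial_iff_two_le.2 hg
        obtain ⟨j, hj⟩ := exists_ne i
        exact ⟨j, hj.symm⟩
      obtain ⟨a, ha⟩ := hℓ _ (hD1 i)
      obtain ⟨b, hb⟩ := hℓ _ (hD1 j)
      obtain ⟨m, hm⟩ := hdiag i
      obtain ⟨k, hk⟩ := hdiag j
      obtain ⟨l, hl⟩ := hoff i j hij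
      change f1 i = a at ha
      change f1 j = b at hb
      obtain ⟨hqi, hqj, hall⟩ := hv i j hij
      obtain ⟨ha0, -, hm0, -⟩ := hall a b m k l (by
        rw [← ha, ← hb, ← hm, ← hk, ← hl]; ring)
      rw [ha0] at ha
      rw [hm0] at hm
      simp at ha
      simp [ha, hqi] at hm
      exact ⟨ha, hm⟩
    apply LinearMap.ext
    intro x
    have hx : x = ∑ i, (((Pi.single i (x.1 i), 0) : (Fin g → ℝ) × (Fin g → ℝ)) 
        + (0, Pi.single i (x.2 i))) := by
      have h1 := (Finset.univ_sum_single x.1)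
      have h2 := (Finset.univ_sum_single x.2)
      rw [Finset.sum_add_distrib]
      apply Prod.ext
      · simp [Prod.fst_sum, h1]
      · simp [Prod.snd_sum, h2]
    rw [hx, map_sum]
    refine Finset.sum_eq_zero fun i _ => ?_
    rw [map_add, hs1, hs2, (hzero i).1, (hzero i).2]
    simp
  intro x
  have : x ∈ D.topologicalClosure := by rw [htop]; trivial
  exact this

theorem aux_half (g : ℕ) (hg : 2 ≤ g) 
    (B : Set (((Fin g → ℝ) × (Fin g → ℝ)) × ((Fin g → ℝ) × (Fin g → ℝ))))
    (hB : MeasurableSet B)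
    (h1 : ∀ i u v, (u, v) ∈ B ↔ (u + (Pi.single i 1, 0), v) ∈ B)
    (h2 : ∀ S : Matrix (Fin g) (Fin g) ℝ, (∀ i j, ∃ k : ℤ, S i j = k) → Sᵀ = S → 
      ∀ u v, (u, v) ∈ B ↔ (u + (S *ᵥ v.1, S *ᵥ v.2), v) ∈ B) :
    ∀ᵐ v : (Fin g → ℝ) × (Fin g → ℝ), volume ((fun u => (u, v)) ⁻¹' B) = 0 ∨ 
      volume ((fun u => (u, v)) ⁻¹' Bᶜ) = 0 := by
  filter_upwards [aux_dense g hg] with v hv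
  let D : AddSubgroup ((Fin g → ℝ) × (Fin g → ℝ)) :=
    { carrier := {w | ∀ u, (u, v) ∈ B ↔ (u + w, v) ∈ B}
      zero_mem' := fun u => by simp
      add_mem' := fun {a b} ha hb u => by rw [ha u, hb (u + a), add_assoc]
      neg_mem' := fun {a} ha u => by rw [ha (u + -a)]; simp }
  have hD : Dense (D : Set ((Fin g → ℝ) × (Fin g → ℝ))) :=
    hv D (fun i u => h1 i u v) (fun S hS hT u => h2 S hS hT u v)
  exact aux_steinhaus volume ((fun u => (u, v)) ⁻¹' B) (measurable_prodMk_right hB) _ hD 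
    (fun d hd u => hd u)

theorem aux_fubini {E : Type*} [MeasurableSpace E] (μ : Measure E) [SFinite μ] (B : Set (E × E)) 
    (hB : MeasurableSet B) 
    (h1 : ∀ᵐ v ∂μ, μ ((fun u => (u, v)) ⁻¹' B) = 0 ∨ μ ((fun u => (u, v)) ⁻¹' Bᶜ) = 0)
    (h2 : ∀ᵐ u ∂μ, μ (Prod.mk u ⁻¹' B) = 0 ∨ μ (Prod.mk u ⁻¹' Bᶜ) = 0) :
    μ.prod μ B = 0 ∨ μ.prod μ Bᶜ = 0 := by
  let N : Set E := {v | μ ((fun u => (u, v)) ⁻¹' B) = 0}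
  have hN : MeasurableSet N := 
    measurableSet_eq_fun (measurable_measure_prodMk_right hB) measurable_const
  by_cases hN0 : μ N = 0
  · right
    rw [Measure.prod_apply_symm hB.compl, lintegral_eq_zero_iff 
      (measurable_measure_prodMk_right hB.compl)]
    have : ∀ᵐ v ∂μ, v ∉ N := measure_eq_zero_iff_ae_notMem.1 hN0
    filter_upwards [this, h1] with v hv hv1
    exact hv1.resolve_left hv
  · left
    have hBN : MeasurableSet (B ∩ (Prod.snd ⁻¹' N)) := hB.inter (measurable_snd hN)
    have h3 : μ.prod μ (B ∩ (Prod.snd ⁻¹' N)) = 0 := by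
      rw [Measure.prod_apply_symm hBN, lintegral_eq_zero_iff 
        (measurable_measure_prodMk_right hBN)]
      refine Filter.Eventually.of_forall fun v => ?_
      by_cases hv : v ∈ N
      · exact measure_mono_null (fun u hu => hu.1) hv
      · have he : (fun u => (u, v)) ⁻¹' (B ∩ (Prod.snd ⁻¹' N)) = ∅ := by
          ext u
          simp [hv]
        change μ ((fun u => (u, v)) ⁻¹' (B ∩ (Prod.snd ⁻¹' N))) = 0
        rw [he, measure_empty]
    rw [Measure.measure_prod_null hBN] at h3
    rw [Measure.measure_prod_null hB]
    filter_upwards [h3, h2] with u hu hu2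
    refine hu2.resolve_right fun hc => hN0 ?_
    have : N ⊆ (Prod.mk u ⁻¹' (B ∩ (Prod.snd ⁻¹' N))) ∪ (Prod.mk u ⁻¹' Bᶜ) := by
      intro v hv
      by_cases h : (u, v) ∈ B
      · exact Or.inl ⟨h, hv⟩
      · exact Or.inr h
    exact measure_mono_null this (measure_union_null hu hc)

theorem aux_core (g : ℕ) (hg : 2 ≤ g) 
    (B : Set (((Fin g → ℝ) × (Fin g → ℝ)) × ((Fin g → ℝ) × (Fin g → ℝ))))
    (hB : MeasurableSet B)
    (h1 : ∀ i u v, (u, v) ∈ B ↔ (u + (Pi.single i 1, 0), v) ∈ B)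
    (h2 : ∀ S : Matrix (Fin g) (Fin g) ℝ, (∀ i j, ∃ k : ℤ, S i j = k) → Sᵀ = S → 
      ∀ u v, (u, v) ∈ B ↔ (u + (S *ᵥ v.1, S *ᵥ v.2), v) ∈ B)
    (h3 : ∀ i u v, (u, v) ∈ B ↔ (u, v + (Pi.single i 1, 0)) ∈ B)
    (h4 : ∀ S : Matrix (Fin g) (Fin g) ℝ, (∀ i j, ∃ k : ℤ, S i j = k) → Sᵀ = S → 
      ∀ u v, (u, v) ∈ B ↔ (u, v + (S *ᵥ u.1, S *ᵥ u.2)) ∈ B) :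
    volume B = 0 ∨ volume Bᶜ = 0 := by
  refine aux_fubini volume B hB (aux_half g hg B hB h1 h2) ?_
  exact aux_half g hg (Prod.swap ⁻¹' B) (measurable_swap hB) (fun i u v => h3 i v u)
    (fun S hS hT u v => h4 S hS hT v u)

instance auxHaar2 (g : ℕ) : (volume : Measure (((Fin g → ℝ) × (Fin g → ℝ)) × 
    ((Fin g → ℝ) × (Fin g → ℝ)))).IsAddHaarMeasure :=
  Measure.prod.instIsAddHaarMeasure volume volume

instance auxHaar3 (g : ℕ) : (volume : Measure (((Fin g ⊕ Fin g) → ℝ) × 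
    ((Fin g ⊕ Fin g) → ℝ))).IsAddHaarMeasure :=
  Measure.prod.instIsAddHaarMeasure volume volume

/-- Rearranging coordinates. -/
def auxPsi (g : ℕ) : (((Fin g → ℝ) × (Fin g → ℝ)) × ((Fin g → ℝ) × (Fin g → ℝ))) →ₗ[ℝ]
    (((Fin g ⊕ Fin g) → ℝ) × ((Fin g ⊕ Fin g) → ℝ)) where
  toFun z := (Sum.elim z.1.1 z.2.1, Sum.elim z.1.2 z.2.2)
  map_add' x y := by
    apply Prod.ext <;> (ext i; cases i <;> simp)
  map_smul' c x := by
    apply Prod.ext <;> (ext i; cases i <;> simp)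

/-- Reducing the first component modulo one. -/
def auxPi (g : ℕ) (z : ((Fin g ⊕ Fin g) → ℝ) × ((Fin g ⊕ Fin g) → ℝ)) :
    ((Fin g ⊕ Fin g) → AddCircle (1 : ℝ)) × ((Fin g ⊕ Fin g) → ℝ) :=
  (fun i => ((z.1 i : ℝ) : AddCircle (1 : ℝ)), z.2)

theorem auxPi_measurable (g : ℕ) : Measurable (auxPi g) := by
  refine Measurable.prodMk ?_ measurable_snd
  refine measurable_pi_lambda _ fun i => ?_
  exact (AddCircle.measurable_mk' (a := (1 : ℝ))).comp ((measurable_pi_apply i).comp measurable_fst)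

theorem auxPi_null (g : ℕ) (A : Set (((Fin g ⊕ Fin g) → AddCircle (1 : ℝ)) × 
    ((Fin g ⊕ Fin g) → ℝ))) (hA : MeasurableSet A) (h : volume (auxPi g ⁻¹' A) = 0) : 
    volume A = 0 := by
  have hm : MeasurePreserving (fun (x : (Fin g ⊕ Fin g) → ℝ) i => ((x i : ℝ) : AddCircle (1 : ℝ)))
      (Measure.pi fun _ => volume.restrict (Set.Ioc (0 : ℝ) (0 + 1))) 
      (Measure.pi fun _ => volume) :=
    measurePreserving_pi _ _ fun i => AddCircle.measurePreserving_mk 1 0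
  have hm2 := hm.prod (MeasurePreserving.id (volume : Measure ((Fin g ⊕ Fin g) → ℝ)))
  have h2 := hm2.measure_preimage hA.nullMeasurableSet
  change _ = volume A at h2
  rw [← h2, ← Measure.restrict_pi_pi]
  refine le_antisymm (le_trans ?_ h.le) zero_le
  exact (Measure.prod_mono Measure.restrict_le_self le_rfl) _

theorem aux_null (g : ℕ) (A : Set (((Fin g ⊕ Fin g) → AddCircle (1 : ℝ)) × 
    ((Fin g ⊕ Fin g) → ℝ))) (hA : MeasurableSet A) 
    (h : volume ((auxPsi g) ⁻¹' (auxPi g ⁻¹' A)) = 0) : volume A = 0 := by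
  apply auxPi_null g A hA
  have hsurj : Function.Surjective (auxPsi g) := by
    intro z
    refine ⟨((fun i => z.1 (Sum.inl i), fun i => z.2 (Sum.inl i)), 
      (fun i => z.1 (Sum.inr i), fun i => z.2 (Sum.inr i))), ?_⟩
    apply Prod.ext <;> (ext i; cases i <;> simp [auxPsi])
  have := (ae_comp_linearMap_mem_iff (auxPsi g) volume volume hsurj 
    (auxPi_measurable g hA).compl).1 (measure_eq_zero_iff_ae_notMem.1 h)
  exact measure_eq_zero_iff_ae_notMem.2 this

/-- For `g ≥ 2`, the diagonal action of `Sp(2g, ℤ)` on `(ℝ/ℤ)^{2g} × ℝ^{2g}`,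
where `M` sends `(x mod ℤ^{2g}, y)` to `(M x mod ℤ^{2g}, M y)`, is ergodic with respect
to the product of the Haar measure on the torus and the Lebesgue measure on `ℝ^{2g}`. -/
theorem sp2gZ_action_on_torus_times_R2g_ergodic (g : ℕ) (hg : 2 ≤ g)
    (A : Set (((Fin g ⊕ Fin g) → AddCircle (1 : ℝ)) × ((Fin g ⊕ Fin g) → ℝ)))
    (hA : MeasurableSet A)
    (hinv : ∀ M : Matrix (Fin g ⊕ Fin g) (Fin g ⊕ Fin g) ℝ,
      (∀ i j, ∃ k : ℤ, M i j = (k : ℝ)) →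
      Mᵀ * Matrix.J (Fin g) ℝ * M = Matrix.J (Fin g) ℝ →
      ∀ x y : (Fin g ⊕ Fin g) → ℝ,
        ((fun i => ((x i : ℝ) : AddCircle (1 : ℝ))), y) ∈ A ↔
          ((fun i => ((M.mulVec x i : ℝ) : AddCircle (1 : ℝ))), M.mulVec y) ∈ A) :
    volume A = 0 ∨ volume Aᶜ = 0 := by
  have hΨ : Measurable (auxPsi g) := 
    (LinearMap.continuous_of_finiteDimensional (auxPsi g)).measurable
  have hsingle : ∀ (i a : Fin g), (((Pi.single i 1 : Fin g → ℝ) a : ℝ) : AddCircle (1 : ℝ)) = 0 := by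
    intro i a
    by_cases h : a = i
    · subst h
      simp
    · simp [h]
  have hone : ∀ i j : Fin g, ∃ k : ℤ, (1 : Matrix (Fin g) (Fin g) ℝ) i j = k := by
    intro i j
    exact ⟨if i = j then 1 else 0, by simp [Matrix.one_apply]⟩
  have key := aux_core g hg ((auxPsi g) ⁻¹' (auxPi g ⁻¹' A)) (hΨ (auxPi_measurable g hA))
    (by
      intro i u v
      simp only [Set.mem_preimage]
      have : auxPi g (auxPsi g (u + (Pi.single i 1, 0), v)) = auxPi g (auxPsi g (u, v)) := by
        apply Prod.ext
        · ext a
          cases a <;> simp [auxPi, auxPsi, hsingle]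
        · ext a
          cases a <;> simp [auxPi, auxPsi]
      rw [this])
    (by
      intro S hS hT u v
      refine (hinv (Matrix.fromBlocks 1 S 0 1) ?_ ?_ _ _).trans ?_
      · rintro (i | i) (j | j)
        · exact hone i j
        · exact hS i j
        · exact ⟨0, by simp⟩
        · exact hone i j
      · simp [Matrix.J, Matrix.fromBlocks_transpose, Matrix.fromBlocks_multiply, hT]
      · simp only [auxPsi, auxPi, Set.mem_preimage, LinearMap.coe_mk, AddHom.coe_mk, 
          Matrix.fromBlocks_mulVec]
        simp)
    (by
      intro i u v
      simp only [Set.mem_preimage]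
      have : auxPi g (auxPsi g (u, v + (Pi.single i 1, 0))) = auxPi g (auxPsi g (u, v)) := by
        apply Prod.ext
        · ext a
          cases a <;> simp [auxPi, auxPsi, hsingle]
        · ext a
          cases a <;> simp [auxPi, auxPsi]
      rw [this])
    (by
      intro S hS hT u v
      refine (hinv (Matrix.fromBlocks 1 0 S 1) ?_ ?_ _ _).trans ?_
      · rintro (i | i) (j | j)
        · exact hone i j
        · exact ⟨0, by simp⟩
        · exact hS i j
        · exact hone i j
      · simp [Matrix.J, Matrix.fromBlocks_transpose, Matrix.fromBlocks_multiply, hT]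
      · simp only [auxPsi, auxPi, Set.mem_preimage, LinearMap.coe_mk, AddHom.coe_mk, 
          Matrix.fromBlocks_mulVec]
        simp [add_comm])
  rcases key with h | h
  · exact Or.inl (aux_null g A hA h)
  · exact Or.inr (aux_null g Aᶜ hA.compl h)
end

section
/- Let g ≥ 2 and let (x,y) ∈ ℝ^{2g} × ℝ^{2g} be a pair of vectors with ω(x,y) ≠ 0. Then the stabilizer {M ∈ Sp(2g,ℝ) : Mx = x and My = y} is a closed subgroup of Sp(2g,ℝ) that is not compact. -/
open Matrix

/-- For `g ≥ 2` and a pair of vectors `(x, y)` in `ℝ^{2g}` with `ω(x, y) ≠ 0`, the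
stabilizer `{M ∈ Sp(2g, ℝ) : M x = x, M y = y}` is a closed subgroup of `Sp(2g, ℝ)`
(closed in the topology of real `2g × 2g` matrices) which is not compact. -/
theorem stabilizer_of_pair_closed_noncompact (g : ℕ) (hg : 2 ≤ g)
    (x y : (Fin g ⊕ Fin g) → ℝ)
    (hxy : x ⬝ᵥ (Matrix.J (Fin g) ℝ).mulVec y ≠ 0) :
    (1 : Matrix (Fin g ⊕ Fin g) (Fin g ⊕ Fin g) ℝ) ∈
        {M : Matrix (Fin g ⊕ Fin g) (Fin g ⊕ Fin g) ℝ |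
          Mᵀ * Matrix.J (Fin g) ℝ * M = Matrix.J (Fin g) ℝ ∧ M.mulVec x = x ∧ M.mulVec y = y} ∧
    (∀ M ∈ {M : Matrix (Fin g ⊕ Fin g) (Fin g ⊕ Fin g) ℝ |
          Mᵀ * Matrix.J (Fin g) ℝ * M = Matrix.J (Fin g) ℝ ∧ M.mulVec x = x ∧ M.mulVec y = y},
      ∀ N ∈ {M : Matrix (Fin g ⊕ Fin g) (Fin g ⊕ Fin g) ℝ |
          Mᵀ * Matrix.J (Fin g) ℝ * M = Matrix.J (Fin g) ℝ ∧ M.mulVec x = x ∧ M.mulVec y = y},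
      M * N ∈ {M : Matrix (Fin g ⊕ Fin g) (Fin g ⊕ Fin g) ℝ |
          Mᵀ * Matrix.J (Fin g) ℝ * M = Matrix.J (Fin g) ℝ ∧ M.mulVec x = x ∧ M.mulVec y = y}) ∧
    (∀ M ∈ {M : Matrix (Fin g ⊕ Fin g) (Fin g ⊕ Fin g) ℝ |
          Mᵀ * Matrix.J (Fin g) ℝ * M = Matrix.J (Fin g) ℝ ∧ M.mulVec x = x ∧ M.mulVec y = y},
      ∃ N ∈ {M : Matrix (Fin g ⊕ Fin g) (Fin g ⊕ Fin g) ℝ |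
          Mᵀ * Matrix.J (Fin g) ℝ * M = Matrix.J (Fin g) ℝ ∧ M.mulVec x = x ∧ M.mulVec y = y},
        M * N = 1 ∧ N * M = 1) ∧
    IsClosed {M : Matrix (Fin g ⊕ Fin g) (Fin g ⊕ Fin g) ℝ |
          Mᵀ * Matrix.J (Fin g) ℝ * M = Matrix.J (Fin g) ℝ ∧ M.mulVec x = x ∧ M.mulVec y = y} ∧
    ¬ IsCompact {M : Matrix (Fin g ⊕ Fin g) (Fin g ⊕ Fin g) ℝ |
          Mᵀ * Matrix.J (Fin g) ℝ * M = Matrix.J (Fin g) ℝ ∧ M.mulVec x = x ∧ M.mulVec y = y} := by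
  refine ⟨by simp, ?_, ?_, ?_, ?_⟩
  · rintro M ⟨hM, hMx, hMy⟩ N ⟨hN, hNx, hNy⟩
    refine ⟨?_, ?_, ?_⟩
    · calc (M * N)ᵀ * J (Fin g) ℝ * (M * N) = Nᵀ * (Mᵀ * J (Fin g) ℝ * M) * N := by
            simp only [transpose_mul, Matrix.mul_assoc]
        _ = _ := by rw [hM, hN]
    · rw [← mulVec_mulVec, hNx, hMx]
    · rw [← mulVec_mulVec, hNy, hMy]
  · rintro M ⟨hM, hMx, hMy⟩
    have h1 : (-(J (Fin g) ℝ * Mᵀ * J (Fin g) ℝ)) * M = 1 := by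
      have : (-(J (Fin g) ℝ * Mᵀ * J (Fin g) ℝ)) * M
          = -(J (Fin g) ℝ * (Mᵀ * J (Fin g) ℝ * M)) := by
        simp only [Matrix.neg_mul, Matrix.mul_assoc]
      rw [this, hM, J_squared, neg_neg]
    generalize (-(J (Fin g) ℝ * Mᵀ * J (Fin g) ℝ)) = N at h1
    have h2 : M * N = 1 := mul_eq_one_comm.mp h1
    refine ⟨N, ⟨?_, ?_, ?_⟩, h2, h1⟩
    · calc Nᵀ * J (Fin g) ℝ * N = Nᵀ * (Mᵀ * J (Fin g) ℝ * M) * N := by rw [hM]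
        _ = (M * N)ᵀ * J (Fin g) ℝ * (M * N) := by
            simp only [transpose_mul, Matrix.mul_assoc]
        _ = _ := by rw [h2]; simp
    · conv_lhs => rw [← hMx]
      rw [mulVec_mulVec, h1, one_mulVec]
    · conv_lhs => rw [← hMy]
      rw [mulVec_mulVec, h1, one_mulVec]
  · refine IsClosed.and ?_ (IsClosed.and ?_ ?_)
    · exact isClosed_eq (by fun_prop) continuous_const
    · exact isClosed_eq (by fun_prop) continuous_const
    · exact isClosed_eq (by fun_prop) continuous_const
  · intro hc
    obtain ⟨v, hv0, hvx, hvy⟩ : ∃ v : (Fin g ⊕ Fin g) → ℝ, v ≠ 0 ∧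
        v ⬝ᵥ (J (Fin g) ℝ).mulVec x = 0 ∧ v ⬝ᵥ (J (Fin g) ℝ).mulVec y = 0 := by
      let A : Matrix (Fin 2) (Fin g ⊕ Fin g) ℝ :=
        Matrix.of ![(J (Fin g) ℝ).mulVec x, (J (Fin g) ℝ).mulVec y]
      have hker : LinearMap.ker A.mulVecLin ≠ ⊥ := by
        apply LinearMap.ker_ne_bot_of_finrank_lt
        simp
        omega
      obtain ⟨v, hv, hv0⟩ := (Submodule.ne_bot_iff _).mp hker
      rw [LinearMap.mem_ker, mulVecLin_apply] at hv
      refine ⟨v, hv0, ?_, ?_⟩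
      · rw [dotProduct_comm]; exact congrFun hv 0
      · rw [dotProduct_comm]; exact congrFun hv 1
    have hJv : (J (Fin g) ℝ) *ᵥ v = -(v ᵥ* J (Fin g) ℝ) := by
      rw [← mulVec_transpose, J_transpose, neg_mulVec, neg_neg]
    have hself : (v ᵥ* J (Fin g) ℝ) ⬝ᵥ v = 0 := by
      have h := dotProduct_mulVec v (J (Fin g) ℝ) v
      rw [hJv, dotProduct_neg, dotProduct_comm] at h
      linarith
    have hu0 : v ᵥ* J (Fin g) ℝ ≠ 0 := by
      intro h
      apply hv0
      have h2 : (v ᵥ* J (Fin g) ℝ) ᵥ* J (Fin g) ℝ = 0 := by rw [h, zero_vecMul]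
      rw [vecMul_vecMul, J_squared, vecMul_neg, vecMul_one] at h2
      exact neg_eq_zero.mp h2
    rw [dotProduct_mulVec] at hvx hvy
    have hvJ : v ᵥ* J (Fin g) ℝ = v ᵥ* J (Fin g) ℝ := rfl
    generalize hu : v ᵥ* J (Fin g) ℝ = u at *
    have hmem : ∀ t : ℝ, (1 + t • vecMulVec v u) ∈
        {M : Matrix (Fin g ⊕ Fin g) (Fin g ⊕ Fin g) ℝ |
          Mᵀ * J (Fin g) ℝ * M = J (Fin g) ℝ ∧ M.mulVec x = x ∧ M.mulVec y = y} := by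
      intro t
      refine ⟨?_, ?_, ?_⟩
      · rw [transpose_add, transpose_smul, transpose_vecMulVec, transpose_one, Matrix.add_mul,
          Matrix.one_mul, Matrix.smul_mul, vecMulVec_mul, hu, Matrix.mul_add, Matrix.mul_one,
          Matrix.add_mul, Matrix.mul_smul, mul_vecMulVec, hJv, Matrix.smul_mul, Matrix.mul_smul,
          vecMulVec_mul_vecMulVec, hself]
        simp [neg_vecMulVec]
      · rw [add_mulVec, one_mulVec, smul_mulVec, vecMulVec_mulVec, hvx]; simp
      · rw [add_mulVec, one_mulVec, smul_mulVec, vecMulVec_mulVec, hvy]; simp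
    obtain ⟨i, hi⟩ := Function.ne_iff.mp hv0
    obtain ⟨j, hj⟩ := Function.ne_iff.mp hu0
    have hcont : Continuous
        (fun M : Matrix (Fin g ⊕ Fin g) (Fin g ⊕ Fin g) ℝ => M i j) := by fun_prop
    have himg := hc.image hcont
    apply noncompact_univ ℝ
    convert himg
    symm
    rw [Set.eq_univ_iff_forall]
    intro r
    have hi' : v i ≠ 0 := hi
    have hj' : u j ≠ 0 := hj
    refine ⟨_, hmem ((r - (1 : Matrix (Fin g ⊕ Fin g) (Fin g ⊕ Fin g) ℝ) i j) / (v i * u j)), ?_⟩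
    simp only [Matrix.add_apply, Matrix.smul_apply, vecMulVec_apply, smul_eq_mul]
    field_simp
    ring
end
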